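/- Let R ∈ ℂ(z)^{m×m} and define G ∈ ℂ(z)^{m×m} entrywise by G_{ij} := the substitution of (I − z)/(I + z) into R_{ij}, where I is the imaginary unit Complex.I. Then R is para-skew-Hermitian if and only if G is skew-Hermitian, i.e. G^* = −G (the coefficientwise-conjugate transpose of G equals −G). -/

import Mathlib

open Polynomial Matrix

set_option synthInstance.maxHeartbeats 1000000
set_option maxHeartbeats 1000000

noncomputable section

/-- Coefficientwise complex conjugation on rational functions. -/
def conjRF : RatFunc ℂ →+* RatFunc ℂ :=
  RatFunc.mapRingHom (Polynomial.mapRingHom (starRingEnd ℂ))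
    (by
      intro x hx
      simp only [Submonoid.mem_comap, mem_nonZeroDivisors_iff_ne_zero] at *
      intro h
      exact hx (Polynomial.map_injective _ (starRingEnd ℂ).injective (by simpa using h)))

/-- Substitution of `g` for the variable in `f`. -/
def subst (g f : RatFunc ℂ) : RatFunc ℂ := RatFunc.eval (algebraMap ℂ (RatFunc ℂ)) g f

/-- Constant complex matrices regarded as matrices over `ℂ(z)`. -/
def toRF {n o : Type*} (A : Matrix n o ℂ) : Matrix n o (RatFunc ℂ) :=
  A.map (algebraMap ℂ (RatFunc ℂ))

/-- The para-conjugate `R^*(1/z)`. -/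
def paraConj {n : Type*} (R : Matrix n n (RatFunc ℂ)) : Matrix n n (RatFunc ℂ) :=
  fun i j => subst (RatFunc.X)⁻¹ (conjRF (R j i))

def IsParaHermitian {n : Type*} (R : Matrix n n (RatFunc ℂ)) : Prop := paraConj R = R

def IsParaSkewHermitian {n : Type*} (R : Matrix n n (RatFunc ℂ)) : Prop := paraConj R = -R

/-- The variable `z` of `ℂ(z)`. -/
def zz : RatFunc ℂ := RatFunc.X

/-- Coefficientwise-conjugate transpose of a matrix over `ℂ(z)`. -/
def conjT {a b : Type*} (R : Matrix a b (RatFunc ℂ)) : Matrix b a (RatFunc ℂ) :=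
  fun i j => conjRF (R j i)

/-- Entrywise substitution of `g` into a matrix over `ℂ(z)`. -/
def substMat {a b : Type*} (g : RatFunc ℂ) (R : Matrix a b (RatFunc ℂ)) :
    Matrix a b (RatFunc ℂ) :=
  fun i j => subst g (R i j)

/-! Conjugating coefficients commutes with substitution, provided the substituted function is
conjugated as well: `conj (f(μ)) = (conj f)(conj μ)`. The Möbius transform `μ = (i - z)/(i + z)`
maps the real line to the unit circle, which algebraically says `conj μ = μ⁻¹`. Hence
`R(μ)^* = R^*(μ⁻¹) = (R^*(z⁻¹))(μ)`, and since `μ` is transcendental over `ℂ`, substituting it is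
an injective ring homomorphism, so the equation `R^*(z⁻¹) = -R` may be tested after substituting
`μ`. -/

section Eval

universe u

variable {K F L : Type u} [Field K] [Field F] [Field L]

lemma ratFunc_eval_div_of_isCoprime (f : K →+* L) (a : L) {p q : K[X]} (h : IsCoprime p q)
    (hq : q ≠ 0) :
    RatFunc.eval f a (algebraMap K[X] (RatFunc K) p / algebraMap K[X] (RatFunc K) q) =
      p.eval₂ f a / q.eval₂ f a := by
  set x := algebraMap K[X] (RatFunc K) p / algebraMap K[X] (RatFunc K) q with hx
  have cross : x.num * q = p * x.denom := (RatFunc.num_mul_eq_mul_denom_iff hq).2 hx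
  have denom_dvd : x.denom ∣ q := RatFunc.denom_div_dvd p q
  have dvd_denom : q ∣ x.denom := h.symm.dvd_of_dvd_mul_left (cross ▸ dvd_mul_left q x.num)
  unfold RatFunc.eval
  by_cases hqa : q.eval₂ f a = 0
  · rw [hqa, eval₂_eq_zero_of_dvd_of_eval₂_eq_zero f a dvd_denom hqa, div_zero, div_zero]
  · have hxa : x.denom.eval₂ f a ≠ 0 :=
      mt (eval₂_eq_zero_of_dvd_of_eval₂_eq_zero f a denom_dvd) hqa
    rw [div_eq_div_iff hxa hqa, ← eval₂_mul, ← eval₂_mul, cross]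

lemma ratFunc_eval_map (σ : K →+* F)
    (hσ : nonZeroDivisors K[X] ≤ (nonZeroDivisors F[X]).comap (mapRingHom σ)) (f : F →+* L) (a : L)
    (p : RatFunc K) :
    RatFunc.eval f a (RatFunc.map (mapRingHom σ) hσ p) = RatFunc.eval (f.comp σ) a p := by
  have hcoprime : IsCoprime (mapRingHom σ p.num) (mapRingHom σ p.denom) :=
    (RatFunc.isCoprime_num_denom p).map (mapRingHom σ)
  have hdenom : mapRingHom σ p.denom ≠ 0 :=
    RatFunc.map_denom_ne_zero _ (map_injective σ σ.injective) p
  rw [RatFunc.map_apply, ratFunc_eval_div_of_isCoprime f a hcoprime hdenom]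
  simp only [coe_mapRingHom, eval₂_map, RatFunc.eval]

lemma map_ratFunc_eval (φ : F →+* L) (f : K →+* F) (a : F) (p : RatFunc K) :
    φ (RatFunc.eval f a p) = RatFunc.eval (φ.comp f) (φ a) p := by
  simp only [RatFunc.eval, map_div₀, hom_eval₂]

/-- Evaluation of rational functions at an element `a` transcendental over `K`. Transcendence is
what makes `RatFunc.eval` additive and multiplicative: no nonzero denominator vanishes at `a`. -/
def ratFuncEvalAlgHom [Algebra K L] (a : L) (ha : Transcendental K a) : RatFunc K →ₐ[K] L :=
  (IntermediateField.val _).comp (RatFunc.algEquivOfTranscendental a ha).toAlgHom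

lemma coe_ratFuncEvalAlgHom [Algebra K L] (a : L) (ha : Transcendental K a) :
    ⇑(ratFuncEvalAlgHom a ha) = RatFunc.eval (algebraMap K L) a :=
  funext fun p ↦ RatFunc.algEquivOfTranscendental_apply a ha p

end Eval

section Mobius

variable {K : Type*} [Field K] {a b c d : K}

lemma ratFunc_C_mul_X_add_C_inj :
    RatFunc.C a * RatFunc.X + RatFunc.C b = RatFunc.C c * RatFunc.X + RatFunc.C d ↔
      a = c ∧ b = d := by
  have algebraMap_linear (s t : K) : algebraMap K[X] (RatFunc K) (C s * X + C t) =
      RatFunc.C s * RatFunc.X + RatFunc.C t := by simp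
  refine ⟨fun h ↦ ?_, fun ⟨hac, hbd⟩ ↦ by rw [hac, hbd]⟩
  have hpoly : (C a * X + C b : K[X]) = C c * X + C d :=
    RatFunc.algebraMap_injective K (by rw [algebraMap_linear, algebraMap_linear, h])
  exact ⟨by simpa using congrArg (coeff · 1) hpoly, by simpa using congrArg (coeff · 0) hpoly⟩

lemma transcendental_mobius (h : a * d - b * c ≠ 0) :
    Transcendental K
      ((RatFunc.C a * RatFunc.X + RatFunc.C b) / (RatFunc.C c * RatFunc.X + RatFunc.C d)) := by
  have hden : RatFunc.C c * RatFunc.X + RatFunc.C d ≠ 0 := fun h0 ↦ by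
    obtain ⟨rfl, rfl⟩ := (ratFunc_C_mul_X_add_C_inj (c := (0 : K)) (d := 0)).1 (by simpa using h0)
    simp at h
  refine RatFunc.transcendental_of_ne_C _ ?_
  rintro ⟨e, he⟩
  rw [div_eq_iff hden, mul_add, ← mul_assoc, ← map_mul, ← map_mul] at he
  obtain ⟨rfl, rfl⟩ := ratFunc_C_mul_X_add_C_inj.1 he
  exact h (by ring)

end Mobius

lemma conjRF_C (c : ℂ) : conjRF (RatFunc.C c) = RatFunc.C (starRingEnd ℂ c) := by
  simp [conjRF, RatFunc.coe_mapRingHom_eq_coe_map, RatFunc.map_apply]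

lemma conjRF_X : conjRF RatFunc.X = RatFunc.X := by
  simp [conjRF, RatFunc.coe_mapRingHom_eq_coe_map, RatFunc.map_apply]

lemma conjRF_subst (g f : RatFunc ℂ) : conjRF (subst g f) = subst (conjRF g) (conjRF f) := by
  have conjRF_comp_algebraMap : conjRF.comp (algebraMap ℂ (RatFunc ℂ)) =
      (algebraMap ℂ (RatFunc ℂ)).comp (starRingEnd ℂ) := RingHom.ext conjRF_C
  have nonZeroDivisors_le : nonZeroDivisors ℂ[X] ≤
      (nonZeroDivisors ℂ[X]).comap (mapRingHom (starRingEnd ℂ)) :=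
    nonZeroDivisors_le_comap_nonZeroDivisors_of_injective _
      (map_injective _ (starRingEnd ℂ).injective)
  rw [subst, map_ratFunc_eval, conjRF_comp_algebraMap, ← ratFunc_eval_map _ nonZeroDivisors_le]
  rfl

lemma subst_eq_ratFuncEvalAlgHom {g : RatFunc ℂ} (hg : Transcendental ℂ g) :
    subst g = ratFuncEvalAlgHom g hg :=
  (coe_ratFuncEvalAlgHom g hg).symm

lemma subst_subst {h : RatFunc ℂ} (hh : Transcendental ℂ h) (g f : RatFunc ℂ) :
    subst h (subst g f) = subst (subst h g) f := by
  rw [subst_eq_ratFuncEvalAlgHom hh]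
  have hφ := map_ratFunc_eval (ratFuncEvalAlgHom h hh).toRingHom (algebraMap ℂ (RatFunc ℂ)) g f
  rwa [AlgHom.toRingHom_eq_coe, AlgHom.comp_algebraMap] at hφ

lemma subst_X_inv {g : RatFunc ℂ} (hg : Transcendental ℂ g) : subst g RatFunc.X⁻¹ = g⁻¹ := by
  rw [subst_eq_ratFuncEvalAlgHom hg, map_inv₀, coe_ratFuncEvalAlgHom, RatFunc.eval_X]

section Matrix

variable {m n : Type*}

lemma conjT_substMat (g : RatFunc ℂ) (R : Matrix m n (RatFunc ℂ)) :
    conjT (substMat g R) = substMat (conjRF g) (conjT R) :=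
  Matrix.ext fun i j ↦ conjRF_subst g (R j i)

lemma substMat_substMat {h : RatFunc ℂ} (hh : Transcendental ℂ h) (g : RatFunc ℂ)
    (R : Matrix m n (RatFunc ℂ)) : substMat h (substMat g R) = substMat (subst h g) R :=
  Matrix.ext fun i j ↦ subst_subst hh g (R i j)

lemma substMat_neg {g : RatFunc ℂ} (hg : Transcendental ℂ g) (R : Matrix m n (RatFunc ℂ)) :
    substMat g (-R) = -substMat g R := by
  ext i j
  simp only [substMat, subst_eq_ratFuncEvalAlgHom hg, Matrix.neg_apply, map_neg]

lemma substMat_injective {g : RatFunc ℂ} (hg : Transcendental ℂ g) :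
    Function.Injective (substMat g : Matrix m n (RatFunc ℂ) → Matrix m n (RatFunc ℂ)) := by
  have hinj : Function.Injective (subst g) :=
    subst_eq_ratFuncEvalAlgHom hg ▸ (ratFuncEvalAlgHom g hg).injective
  exact Matrix.map_injective hinj

end Matrix

lemma transcendental_I_sub_zz_div_I_add_zz :
    Transcendental ℂ ((RatFunc.C Complex.I - zz) / (RatFunc.C Complex.I + zz)) := by
  have hμ : (RatFunc.C Complex.I - zz) / (RatFunc.C Complex.I + zz) =
      (RatFunc.C (-1) * RatFunc.X + RatFunc.C Complex.I) /
        (RatFunc.C 1 * RatFunc.X + RatFunc.C Complex.I) := by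
    simp only [zz, map_neg, map_one]
    ring
  rw [hμ]
  exact transcendental_mobius (by norm_num [← neg_add', ← two_mul])

lemma conjRF_I_sub_zz_div_I_add_zz :
    conjRF ((RatFunc.C Complex.I - zz) / (RatFunc.C Complex.I + zz)) =
      ((RatFunc.C Complex.I - zz) / (RatFunc.C Complex.I + zz))⁻¹ := by
  simp only [zz, map_div₀, map_sub, map_add, conjRF_C, conjRF_X, Complex.conj_I, map_neg, inv_div]
  rw [← neg_div_neg_eq]
  ring

theorem paraSkewHermitian_iff_mobius_skewHermitian_general {n : Type*} {μ : RatFunc ℂ}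
    (hμ : Transcendental ℂ μ) (hμ_conj : conjRF μ = μ⁻¹) (R : Matrix n n (RatFunc ℂ)) :
    IsParaSkewHermitian R ↔ conjT (substMat μ R) = -substMat μ R := by
  have conjT_eq : conjT (substMat μ R) = substMat μ (paraConj R) := calc
    conjT (substMat μ R) = substMat μ⁻¹ (conjT R) := by rw [conjT_substMat, hμ_conj]
    _ = substMat μ (substMat RatFunc.X⁻¹ (conjT R)) := by
      rw [substMat_substMat hμ, subst_X_inv hμ]
    _ = substMat μ (paraConj R) := rfl
  rw [conjT_eq, ← substMat_neg hμ, (substMat_injective hμ).eq_iff, IsParaSkewHermitian]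

/-- `R` is para-skew-Hermitian iff `G(x) := R((i-x)/(i+x))` is skew-Hermitian. -/
theorem paraSkewHermitian_iff_mobius_skewHermitian (m : ℕ)
    (R G : Matrix (Fin m) (Fin m) (RatFunc ℂ))
    (hG : G = substMat ((RatFunc.C Complex.I - zz) / (RatFunc.C Complex.I + zz)) R) :
    IsParaSkewHermitian R ↔ conjT G = -G :=
  hG ▸ paraSkewHermitian_iff_mobius_skewHermitian_general transcendental_I_sub_zz_div_I_add_zz
    conjRF_I_sub_zz_div_I_add_zz R
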